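/- Let I ⊂ ℝ be a bounded interval with center z and let 1 < p < ∞. The maximal operator N_I f(x) = sup_{r ∈ 2^ℤ} |I|^{−1} ∫_I |f(x − r y)| dy maps L^p(ℝ) to L^p(ℝ) with operator norm O((log(2 + |z|/|I|))^{1/p}). -/

import Mathlib

open MeasureTheory

/-- The lacunary maximal operator `N_I f(x) = sup_{r ∈ 2^ℤ} |I|⁻¹ ∫_I |f(x - r y)| dy`
over the interval `I = (z - L, z + L)` of center `z` and length `2L`. -/
noncomputable def lacMax (z L : ℝ) (f : ℝ → ℝ) (x : ℝ) : ENNReal :=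
  ⨆ n : ℤ, (ENNReal.ofReal (2 * L))⁻¹ *
    ∫⁻ y in Set.Ioo (z - L) (z + L), ENNReal.ofReal |f (x - (2 : ℝ) ^ n * y)|

open Metric Set

open scoped ENNReal

/-- The average in `lacMax` at scale `2 ^ n`, as an integral over a ball centered at
`x - 2 ^ n * z`. -/
lemma two_pow_mul_lintegral_Ioo_comp_sub_mul (z L x : ℝ) (n : ℤ) {F : ℝ → ℝ≥0∞}
    (hF : Measurable F) :
    ENNReal.ofReal ((2 : ℝ) ^ n) * ∫⁻ y in Ioo (z - L) (z + L), F (x - (2 : ℝ) ^ n * y) =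
      ∫⁻ u in ball (x - (2 : ℝ) ^ n * z) ((2 : ℝ) ^ n * L), F u := by
  set a : ℝ := (2 : ℝ) ^ n
  have ha0 : 0 < a := by positivity
  set B : Set ℝ := ball (x - a * z) (a * L) with hB
  have hH : Measurable (B.indicator F) := hF.indicator measurableSet_ball
  have h1 : ∀ y, (Ioo (z - L) (z + L)).indicator (fun y => F (x - a * y)) y =
      B.indicator F (x - a * y) := by
    intro y
    have : y ∈ Ioo (z - L) (z + L) ↔ x - a * y ∈ B := by
      rw [hB, ← Real.ball_eq_Ioo, mem_ball, mem_ball, Real.dist_eq, Real.dist_eq,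
        show x - a * y - (x - a * z) = -(a * (y - z)) by ring, abs_neg, abs_mul, abs_of_pos ha0]
      exact (mul_lt_mul_iff_right₀ ha0).symm
    by_cases hy : y ∈ Ioo (z - L) (z + L)
    · rw [indicator_of_mem hy, indicator_of_mem (this.1 hy)]
    · rw [indicator_of_notMem hy, indicator_of_notMem (fun h => hy (this.2 h))]
  rw [← lintegral_indicator measurableSet_Ioo, ← lintegral_indicator measurableSet_ball]
  simp_rw [h1]
  have h2 : ∫⁻ y, B.indicator F (x - a * y) =
      ∫⁻ v, B.indicator F (x - v) ∂(Measure.map (a * ·) volume) := by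
    rw [lintegral_map (f := fun v => B.indicator F (x - v))
      (hH.comp (measurable_const.sub measurable_id)) (measurable_const_mul a)]
  rw [h2, Real.map_volume_mul_left ha0.ne', lintegral_smul_measure, smul_eq_mul, ← mul_assoc,
    ← ENNReal.ofReal_mul ha0.le, abs_of_pos (inv_pos.2 ha0), mul_inv_cancel₀ ha0.ne',
    ENNReal.ofReal_one, one_mul]
  exact lintegral_sub_left_eq_self (B.indicator F) x

lemma ofReal_lt_lacMax_iff (z : ℝ) {L : ℝ} (hL : 0 < L) {f : ℝ → ℝ} (hf : Measurable f)
    {t : ℝ} (x : ℝ) :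
    ENNReal.ofReal t < lacMax z L f x ↔ ∃ n : ℤ,
      ENNReal.ofReal t * ENNReal.ofReal (2 * ((2 : ℝ) ^ n * L)) <
        ∫⁻ u in ball (x - (2 : ℝ) ^ n * z) ((2 : ℝ) ^ n * L), ENNReal.ofReal |f u| := by
  rw [lacMax, lt_iSup_iff]
  refine exists_congr fun n => ?_
  have hF : Measurable fun u => ENNReal.ofReal |f u| := by fun_prop
  have ha0 : (0 : ℝ) < (2 : ℝ) ^ n := by positivity
  rw [← two_pow_mul_lintegral_Ioo_comp_sub_mul z L x n hF, mul_comm _⁻¹, ← div_eq_mul_inv,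
    ENNReal.lt_div_iff_mul_lt (Or.inl (by simpa using hL)) (Or.inl ENNReal.ofReal_ne_top),
    show 2 * ((2 : ℝ) ^ n * L) = 2 ^ n * (2 * L) by ring, ENNReal.ofReal_mul ha0.le,
    mul_left_comm, ENNReal.mul_lt_mul_iff_right (by simpa using ha0) ENNReal.ofReal_ne_top]

lemma measurable_lacMax (z L : ℝ) {f : ℝ → ℝ} (hf : Measurable f) :
    Measurable (lacMax z L f) := by
  refine Measurable.iSup fun n => Measurable.const_mul ?_ _
  refine Measurable.lintegral_prod_right' (f := fun q : ℝ × ℝ =>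
    ENNReal.ofReal |f (q.1 - (2 : ℝ) ^ n * q.2)|) ?_
  fun_prop

/-- The translates of `closedBall c (5 * r)` by lacunary multiples `2 ^ m * z`, at scales
`m ≤ n + 2` where `r = 2 ^ n * L`, overlap so much that their union has measure comparable to
`k * r`, where `k` is logarithmic in `|z| / L`. -/
lemma volume_iUnion_closedBall_add_two_zpow_mul_le {z L : ℝ} (hL : 0 < L) {k : ℕ}
    (hk : |z| ≤ 2 ^ k * L) (c : ℝ) (n : ℤ) :
    volume (⋃ m ∈ Iic (n + 2), closedBall (c + (2 : ℝ) ^ m * z) (5 * ((2 : ℝ) ^ n * L))) ≤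
      ENNReal.ofReal (5 * k + 16) * ENNReal.ofReal (2 * ((2 : ℝ) ^ n * L)) := by
  set r : ℝ := (2 : ℝ) ^ n * L with hr
  have hr0 : 0 < r := by positivity
  have hsub : (⋃ m ∈ Iic (n + 2), closedBall (c + (2 : ℝ) ^ m * z) (5 * r)) ⊆
      closedBall c (6 * r) ∪
        ⋃ m ∈ Finset.Ioc (n - k) (n + 2), closedBall (c + (2 : ℝ) ^ m * z) (5 * r) := by
    refine iUnion₂_subset fun m hm => ?_
    by_cases h : m ≤ n - k
    · refine subset_union_of_subset_left (closedBall_subset_closedBall' ?_) _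
      rw [Real.dist_eq, add_sub_cancel_left, abs_mul, abs_of_pos (by positivity)]
      have h1 : (2 : ℝ) ^ m * |z| ≤ 2 ^ (n - k) * (2 ^ k * L) := by
        gcongr
        norm_num
      have h2 : (2 : ℝ) ^ (n - k) * (2 ^ k * L) = r := by
        rw [← mul_assoc, ← zpow_natCast, ← zpow_add₀ two_ne_zero, sub_add_cancel]
      linarith
    · refine subset_union_of_subset_right ?_ _
      exact subset_biUnion_of_mem (u := fun m : ℤ => closedBall (c + (2 : ℝ) ^ m * z) (5 * r))
        (Finset.mem_coe.2 (Finset.mem_Ioc.2 ⟨not_le.1 h, hm⟩))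
  calc _ ≤ volume (closedBall c (6 * r)) + ∑ m ∈ Finset.Ioc (n - k) (n + 2),
        volume (closedBall (c + (2 : ℝ) ^ m * z) (5 * r)) :=
        (measure_mono hsub).trans ((measure_union_le _ _).trans
          (by gcongr; exact measure_biUnion_finset_le _ _))
    _ = ENNReal.ofReal (2 * (6 * r)) + (k + 2 : ℕ) * ENNReal.ofReal (2 * (5 * r)) := by
        simp only [Real.volume_closedBall, Finset.sum_const, Int.card_Ioc, nsmul_eq_mul]
        congr 3
        omega
    _ = _ := by
        rw [← ENNReal.ofReal_natCast, ← ENNReal.ofReal_mul (by positivity),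
          ← ENNReal.ofReal_mul (by positivity),
          ← ENNReal.ofReal_add (by positivity) (by positivity)]
        congr 1
        push_cast
        ring

/-- Weak type `(1,1)` bound for `lacMax`. -/
lemma ofReal_mul_volume_lacMax_le {z L : ℝ} (hL : 0 < L) {k : ℕ} (hk : |z| ≤ 2 ^ k * L)
    {f : ℝ → ℝ} (hf : Measurable f) {t : ℝ} (ht : 0 < t) :
    ENNReal.ofReal t * volume {x | ENNReal.ofReal t < lacMax z L f x} ≤
      ENNReal.ofReal (5 * k + 16) * ∫⁻ x, ENNReal.ofReal |f x| := by
  rcases eq_or_ne (∫⁻ x, ENNReal.ofReal |f x|) ∞ with hI | hI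
  · rw [hI, ENNReal.mul_top (by simp; positivity)]
    exact le_top
  let x : ℝ × ℤ → ℝ := fun q => q.1 - (2 : ℝ) ^ q.2 * z
  let r : ℝ × ℤ → ℝ := fun q => (2 : ℝ) ^ q.2 * L
  have hr0 : ∀ q, 0 < r q := fun q => by positivity
  let T : Set (ℝ × ℤ) := {q | ENNReal.ofReal t * ENNReal.ofReal (2 * r q) <
    ∫⁻ u in closedBall (x q) (r q), ENNReal.ofReal |f u|}
  have hR : ∀ q ∈ T, r q ≤ (∫⁻ x, ENNReal.ofReal |f x|).toReal / (2 * t) := by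
    intro q hq
    have h1 := hq.le.trans (setLIntegral_le_lintegral _ _)
    rw [← ENNReal.ofReal_mul ht.le, ENNReal.ofReal_le_iff_le_toReal hI] at h1
    rw [le_div_iff₀ (by positivity)]
    linarith
  obtain ⟨u, huT, hdisj, hcov⟩ := Vitali.exists_disjoint_subfamily_covering_enlargement_closedBall
    T x r _ hR 5 (by norm_num)
  have hcount : u.Countable := hdisj.countable_of_nonempty_interior fun q _ =>
    (nonempty_ball.2 (hr0 q)).mono ball_subset_interior_closedBall
  have hsub : {y | ENNReal.ofReal t < lacMax z L f y} ⊆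
      ⋃ q ∈ u, ⋃ m ∈ Iic (q.2 + 2), closedBall (x q + (2 : ℝ) ^ m * z) (5 * r q) := by
    intro y hy
    obtain ⟨n, hn⟩ := (ofReal_lt_lacMax_iff z hL hf y).1 hy
    have hT : (y, n) ∈ T := hn.trans_le (lintegral_mono_set ball_subset_closedBall)
    obtain ⟨q, hq, hsub⟩ := hcov _ hT
    refine mem_biUnion hq ?_
    have hmem : x (y, n) ∈ closedBall (x q) (5 * r q) :=
      hsub (mem_closedBall_self (hr0 _).le)
    have hle : r (y, n) ≤ 5 * r q := by
      have h1 := measure_mono (μ := volume) hsub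
      rw [Real.volume_closedBall, Real.volume_closedBall,
        ENNReal.ofReal_le_ofReal_iff (by have := hr0 q; positivity)] at h1
      linarith
    have hn2 : n ≤ q.2 + 2 := by
      by_contra! h
      have h1 : (2 : ℝ) ^ (q.2 + 3) ≤ 2 ^ n := zpow_le_zpow_right₀ one_le_two (by omega)
      rw [zpow_add₀ two_ne_zero] at h1
      have h2 : (2 : ℝ) ^ n ≤ 5 * 2 ^ q.2 := by
        refine le_of_mul_le_mul_right ?_ hL
        simpa [r, mul_assoc] using hle
      have h3 : (0 : ℝ) < 2 ^ q.2 := by positivity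
      norm_num at h1
      linarith
    refine mem_biUnion (x := n) hn2 ?_
    rw [mem_closedBall, Real.dist_eq] at hmem ⊢
    convert hmem using 2
    simp only [x]
    ring
  have hball : ∀ q : u, ENNReal.ofReal t * volume
      (⋃ m ∈ Iic ((q : ℝ × ℤ).2 + 2), closedBall (x q + (2 : ℝ) ^ m * z) (5 * r q)) ≤
      ENNReal.ofReal (5 * k + 16) * ∫⁻ u in closedBall (x q) (r q), ENNReal.ofReal |f u| := by
    intro q
    calc _ ≤ ENNReal.ofReal t * (ENNReal.ofReal (5 * k + 16) * ENNReal.ofReal (2 * r q)) := by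
          gcongr
          exact volume_iUnion_closedBall_add_two_zpow_mul_le hL hk _ _
      _ = ENNReal.ofReal (5 * k + 16) * (ENNReal.ofReal t * ENNReal.ofReal (2 * r q)) :=
          mul_left_comm _ _ _
      _ ≤ _ := by
          gcongr
          exact (huT q.2).le
  calc _ ≤ ENNReal.ofReal t * ∑' q : u, volume
        (⋃ m ∈ Iic ((q : ℝ × ℤ).2 + 2), closedBall (x q + (2 : ℝ) ^ m * z) (5 * r q)) := by
        gcongr
        exact (measure_mono hsub).trans (measure_biUnion_le _ hcount _)
    _ ≤ ∑' q : u, ENNReal.ofReal (5 * k + 16) *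
          ∫⁻ u in closedBall (x q) (r q), ENNReal.ofReal |f u| := by
        rw [← ENNReal.tsum_mul_left]
        exact ENNReal.tsum_le_tsum hball
    _ = ENNReal.ofReal (5 * k + 16) *
          ∫⁻ u in ⋃ q ∈ u, closedBall (x q) (r q), ENNReal.ofReal |f u| := by
        rw [ENNReal.tsum_mul_left,
          lintegral_biUnion hcount (fun _ _ => measurableSet_closedBall) hdisj]
    _ ≤ _ := by
        gcongr 1
        exact setLIntegral_le_lintegral _ _

/-- Truncating `f` at height `t` lowers `lacMax` by at most `t`. -/
lemma lacMax_le_lacMax_indicator_add (z : ℝ) {L : ℝ} (hL : 0 < L) (f : ℝ → ℝ) (t x : ℝ) :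
    lacMax z L f x ≤ lacMax z L ({u | t < |f u|}.indicator f) x + ENNReal.ofReal t := by
  refine iSup_le fun n => ?_
  have hL0 : ENNReal.ofReal (2 * L) ≠ 0 := by simp [hL]
  have hpt : ∀ u, ENNReal.ofReal |f u| ≤
      ENNReal.ofReal |({u | t < |f u|}.indicator f) u| + ENNReal.ofReal t := by
    intro u
    by_cases hu : t < |f u|
    · rw [indicator_of_mem (s := {u | t < |f u|}) hu]
      exact le_self_add
    · exact (ENNReal.ofReal_le_ofReal (not_lt.1 hu)).trans le_add_self
  calc _ ≤ (ENNReal.ofReal (2 * L))⁻¹ * ∫⁻ y in Ioo (z - L) (z + L),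
        (ENNReal.ofReal |({u | t < |f u|}.indicator f) (x - (2 : ℝ) ^ n * y)| +
          ENNReal.ofReal t) := by
        gcongr
        exact hpt _
    _ = (ENNReal.ofReal (2 * L))⁻¹ * (∫⁻ y in Ioo (z - L) (z + L),
        ENNReal.ofReal |({u | t < |f u|}.indicator f) (x - (2 : ℝ) ^ n * y)|) +
          ENNReal.ofReal t := by
        rw [lintegral_add_right _ measurable_const, setLIntegral_const, Real.volume_Ioo,
          show z + L - (z - L) = 2 * L by ring, mul_add, mul_left_comm,
          ENNReal.inv_mul_cancel hL0 ENNReal.ofReal_ne_top, mul_one]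
    _ ≤ _ := by
        gcongr
        exact le_iSup (fun n : ℤ => (ENNReal.ofReal (2 * L))⁻¹ * ∫⁻ y in Ioo (z - L) (z + L),
          ENNReal.ofReal |({u | t < |f u|}.indicator f) (x - (2 : ℝ) ^ n * y)|) n

/-- Layer cake inequality for extended nonnegative functions. -/
lemma lintegral_rpow_le_lintegral_meas_lt_mul {α : Type*} [MeasurableSpace α] (μ : Measure α)
    {F : α → ℝ≥0∞} (hF : Measurable F) {p : ℝ} (hp : 0 < p) :
    ∫⁻ x, F x ^ p ∂μ ≤ ENNReal.ofReal p *
      ∫⁻ t in Ioi (0 : ℝ), μ {x | ENNReal.ofReal t < F x} * ENNReal.ofReal (t ^ (p - 1)) := by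
  have hsup : ∀ x, F x ^ p = ⨆ M : ℕ, min (F x) M ^ p := by
    intro x
    refine le_antisymm ?_ (iSup_le fun M => by gcongr; exact min_le_left _ _)
    rcases eq_or_ne (F x) ∞ with h | h
    · simp only [h, le_top, inf_of_le_right]
      rw [ENNReal.top_rpow_of_pos hp]
      refine le_of_forall_lt fun b hb => ?_
      obtain ⟨M, hM⟩ := ENNReal.exists_nat_gt
        (ENNReal.rpow_ne_top_of_nonneg (inv_nonneg.2 hp.le) hb.ne)
      refine lt_of_lt_of_le ?_ (le_iSup (fun M : ℕ => (M : ℝ≥0∞) ^ p) M)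
      simpa [← ENNReal.rpow_mul, inv_mul_cancel₀ hp.ne'] using ENNReal.rpow_lt_rpow hM hp
    · obtain ⟨M, hM⟩ := ENNReal.exists_nat_gt h
      refine le_iSup_of_le M ?_
      rw [min_eq_left hM.le]
  simp_rw [hsup]
  rw [lintegral_iSup (fun M => (hF.min measurable_const).pow_const p) fun M N hMN x => by
    dsimp only
    gcongr]
  refine iSup_le fun M => ?_
  have hfin : ∀ x, min (F x) M ≠ ∞ := fun x =>
    ((min_le_right _ _).trans_lt (ENNReal.natCast_lt_top M)).ne
  have hlc := lintegral_rpow_eq_lintegral_meas_lt_mul μ (f := fun x => (min (F x) M).toReal)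
    (Filter.Eventually.of_forall fun x => ENNReal.toReal_nonneg)
    (hF.min measurable_const).ennreal_toReal.aemeasurable hp
  simp only [ENNReal.toReal_rpow,
    ENNReal.ofReal_toReal (ENNReal.rpow_ne_top_of_nonneg hp.le (hfin _))] at hlc
  rw [hlc]
  gcongr 1
  refine setLIntegral_mono' measurableSet_Ioi fun t ht => ?_
  gcongr with x
  intro hx
  exact ((ENNReal.ofReal_lt_iff_lt_toReal (le_of_lt ht) (hfin x)).2 hx).trans_le (min_le_left _ _)

/-- Marcinkiewicz interpolation between the weak type `(1,1)` bound and the `L^∞` bound. -/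
lemma lintegral_lacMax_rpow_le {p : ℝ} (hp : 1 < p) {z L : ℝ} (hL : 0 < L) {k : ℕ}
    (hk : |z| ≤ 2 ^ k * L) {f : ℝ → ℝ} (hf : Measurable f) :
    ∫⁻ x, lacMax z L f x ^ p ≤
      ENNReal.ofReal (p * 2 ^ p / (p - 1) * (5 * k + 16)) * ∫⁻ x, ENNReal.ofReal (|f x| ^ p) := by
  have hp1 : 0 < p - 1 := sub_pos.2 hp
  have hp0 : 0 < p := by linarith
  set ν : Measure ℝ := volume.withDensity fun x => ENNReal.ofReal |f x| with hν
  have hd : Measurable fun x => ENNReal.ofReal |f x| := by fun_prop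
  have hweak : ∀ t ∈ Ioi (0 : ℝ), volume {x | ENNReal.ofReal t < lacMax z L f x} *
      ENNReal.ofReal (t ^ (p - 1)) ≤ ENNReal.ofReal (2 * (5 * k + 16)) *
        (ν {x | t < 2 * |f x|} * ENNReal.ofReal (t ^ (p - 1 - 1))) := by
    intro t ht
    have ht0 : 0 < t := ht
    have hset : MeasurableSet {u | t / 2 < |f u|} := measurableSet_lt measurable_const (by fun_prop)
    have h1 : {x | ENNReal.ofReal t < lacMax z L f x} ⊆
        {x | ENNReal.ofReal (t / 2) < lacMax z L ({u | t / 2 < |f u|}.indicator f) x} := by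
      intro x hx
      have h2 := lt_of_lt_of_le hx (lacMax_le_lacMax_indicator_add z hL f (t / 2) x)
      rw [show t = t / 2 + t / 2 by ring, ENNReal.ofReal_add (by positivity) (by positivity),
        add_halves] at h2
      exact lt_of_add_lt_add_right h2
    have h3 := ofReal_mul_volume_lacMax_le hL hk (hf.indicator hset) (half_pos ht0)
    have h4 : ∫⁻ x, ENNReal.ofReal |({u | t / 2 < |f u|}.indicator f) x| =
        ν {x | t < 2 * |f x|} := by
      have hs : {x | t < 2 * |f x|} = {u | t / 2 < |f u|} := by
        ext x
        simp only [mem_ofPred_eq]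
        constructor <;> intro h <;> linarith
      rw [hs, hν, withDensity_apply _ hset, ← lintegral_indicator hset]
      congr 1 with x
      by_cases hx : x ∈ {u | t / 2 < |f u|}
      · rw [indicator_of_mem hx, indicator_of_mem hx]
      · rw [indicator_of_notMem hx, indicator_of_notMem hx, abs_zero, ENNReal.ofReal_zero]
    rw [h4] at h3
    have h5 : t ^ (p - 1) = 2 * t ^ (p - 1 - 1) * (t / 2) := by
      rw [Real.rpow_sub_one ht0.ne' (p - 1)]
      field_simp
    have ht1 : 0 ≤ t ^ (p - 1 - 1) := by positivity
    calc _ ≤ volume {x | ENNReal.ofReal (t / 2) <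
          lacMax z L ({u | t / 2 < |f u|}.indicator f) x} * ENNReal.ofReal (t ^ (p - 1)) := by
          gcongr
      _ = ENNReal.ofReal (2 * t ^ (p - 1 - 1)) * (ENNReal.ofReal (t / 2) * volume
            {x | ENNReal.ofReal (t / 2) <
              lacMax z L ({u | t / 2 < |f u|}.indicator f) x}) := by
          rw [h5, ENNReal.ofReal_mul (by positivity)]
          ring
      _ ≤ ENNReal.ofReal (2 * t ^ (p - 1 - 1)) *
            (ENNReal.ofReal (5 * k + 16) * ν {x | t < 2 * |f x|}) := by
          gcongr
      _ = _ := by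
          rw [ENNReal.ofReal_mul zero_le_two, ENNReal.ofReal_mul zero_le_two]
          ring
  have hlc := lintegral_rpow_eq_lintegral_meas_lt_mul ν (f := fun x => 2 * |f x|)
    (Filter.Eventually.of_forall fun x => by positivity)
    (by fun_prop) hp1
  have hν_int : ∫⁻ x, ENNReal.ofReal ((2 * |f x|) ^ (p - 1)) ∂ν =
      ENNReal.ofReal (2 ^ (p - 1)) * ∫⁻ x, ENNReal.ofReal (|f x| ^ p) := by
    rw [hν, lintegral_withDensity_eq_lintegral_mul _ hd (by fun_prop),
      ← lintegral_const_mul _ (by fun_prop)]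
    congr 1 with x
    rw [Pi.mul_apply, ← ENNReal.ofReal_mul (abs_nonneg _), ← ENNReal.ofReal_mul (by positivity),
      Real.mul_rpow zero_le_two (abs_nonneg _)]
    congr 1
    rcases (abs_nonneg (f x)).eq_or_lt with h | h
    · simp [← h, Real.zero_rpow hp0.ne']
    · rw [Real.rpow_sub_one h.ne' p]
      field_simp
  rw [hν_int] at hlc
  calc _ ≤ ENNReal.ofReal p * ∫⁻ t in Ioi (0 : ℝ),
        volume {x | ENNReal.ofReal t < lacMax z L f x} * ENNReal.ofReal (t ^ (p - 1)) :=
        lintegral_rpow_le_lintegral_meas_lt_mul _ (measurable_lacMax z L hf) hp0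
    _ ≤ ENNReal.ofReal p * ∫⁻ t in Ioi (0 : ℝ), ENNReal.ofReal (2 * (5 * k + 16)) *
        (ν {x | t < 2 * |f x|} * ENNReal.ofReal (t ^ (p - 1 - 1))) := by
        gcongr 1
        exact setLIntegral_mono' measurableSet_Ioi hweak
    _ = ENNReal.ofReal (p * (2 * (5 * k + 16)) / (p - 1)) * (ENNReal.ofReal (p - 1) *
        ∫⁻ t in Ioi (0 : ℝ), ν {x | t < 2 * |f x|} * ENNReal.ofReal (t ^ (p - 1 - 1))) := by
        rw [lintegral_const_mul' _ _ ENNReal.ofReal_ne_top, ← mul_assoc, ← mul_assoc,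
          ← ENNReal.ofReal_mul hp0.le, ← ENNReal.ofReal_mul (by positivity),
          div_mul_cancel₀ _ hp1.ne']
    _ = _ := by
        rw [← hlc, ← mul_assoc, ← ENNReal.ofReal_mul (by positivity)]
        congr 2
        rw [Real.rpow_sub_one two_ne_zero p]
        field_simp

lemma exists_nat_le_two_pow_and_le_log {A : ℝ} (hA : 0 ≤ A) :
    ∃ k : ℕ, 2 * A ≤ 2 ^ k ∧ (5 * k + 16 : ℝ) ≤ 31 / Real.log 2 * Real.log (2 + A) := by
  have h2 : (0 : ℝ) < Real.log 2 := Real.log_pos one_lt_two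
  set l : ℝ := Real.logb 2 (2 + A) with hl
  have hl1 : 1 ≤ l := by
    rw [hl, Real.le_logb_iff_rpow_le one_lt_two (by positivity), Real.rpow_one]
    linarith
  refine ⟨⌈l + 1⌉₊, ?_, ?_⟩
  · have h3 : l + 1 ≤ ⌈l + 1⌉₊ := Nat.le_ceil _
    have h4 : (2 : ℝ) ^ (l + 1) ≤ 2 ^ (⌈l + 1⌉₊ : ℝ) :=
      Real.rpow_le_rpow_of_exponent_le one_le_two h3
    rw [Real.rpow_natCast, Real.rpow_add_one two_ne_zero, hl,
      Real.rpow_logb two_pos (by norm_num) (by positivity)] at h4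
    linarith
  · have h3 := Nat.ceil_lt_add_one (a := l + 1) (by positivity)
    have h4 : 31 / Real.log 2 * Real.log (2 + A) = 31 * l := by
      rw [hl, Real.logb]
      ring
    rw [h4]
    linarith

/-- Lemma 3.1, strong type `(p,p)` part: `N_I` maps `L^p → L^p` with operator norm
`O((log(2 + |z|/|I|))^{1/p})` for `1 < p < ∞`. -/
theorem stmt7 (p : ℝ) (hp : 1 < p) :
    ∃ C : ℝ, 0 < C ∧ ∀ z L : ℝ, 0 < L → ∀ f : ℝ → ℝ, Measurable f →
      (∫⁻ x, lacMax z L f x ^ p) ^ (1 / p)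
        ≤ ENNReal.ofReal (C * Real.log (2 + |z| / (2 * L)) ^ (1 / p)) *
            (∫⁻ x, ENNReal.ofReal (|f x| ^ p)) ^ (1 / p) := by
  have hp1 : 0 < p - 1 := sub_pos.2 hp
  have hp0 : 0 < p := by linarith
  have h2 : (0 : ℝ) < Real.log 2 := Real.log_pos one_lt_two
  set c : ℝ := p * 2 ^ p / (p - 1) * (31 / Real.log 2) with hc
  have hc0 : 0 < c := by positivity
  refine ⟨c ^ (1 / p), by positivity, fun z L hL f hf => ?_⟩
  have hA : 0 ≤ |z| / (2 * L) := by positivity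
  obtain ⟨k, hk, hlog⟩ := exists_nat_le_two_pow_and_le_log hA
  have hk' : |z| ≤ 2 ^ k * L := by
    rwa [← div_le_iff₀ hL, show |z| / L = 2 * (|z| / (2 * L)) by field_simp]
  have hlog0 : 0 < Real.log (2 + |z| / (2 * L)) := Real.log_pos (by linarith)
  rw [← Real.mul_rpow hc0.le hlog0.le,
    ← ENNReal.ofReal_rpow_of_nonneg (by positivity) (by positivity),
    ← ENNReal.mul_rpow_of_nonneg _ _ (by positivity)]
  gcongr
  refine (lintegral_lacMax_rpow_le hp hL hk' hf).trans ?_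
  rw [hc, mul_assoc _ (31 / Real.log 2)]
  gcongr
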